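/- Every continuous map f : S^d → ℝ^d (d ≥ 1) satisfying f(−x) = −f(x) for all x has a zero. (Borsuk–Ulam for the case n = 1 of the Stiefel manifold W_1(ℝ^{d+1}) = S^d.) -/

import Mathlib

/-!
By the Stone–Weierstrass theorem each coordinate of `f` is, on the sphere, uniformly close to a
polynomial; passing to the odd part and multiplying its components by powers of `∑ j, X j ^ 2`
turns these polynomials into forms `F i` of one odd degree `D`. Since the sphere is compact, it is
enough to find points of the sphere at which all the `F i` are small.

Let `p i` be the polynomial in `d` variables obtained from `F i` by setting the `0`-th variable to
`1`, and deform the system `X i ^ D` to `g i = X i ^ D + s * p i`. The products of the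
`X i ^ a * g i ^ b` with `a < D` are the monomials when `s = 0`; the determinants expressing them
through the monomials are polynomials in `s` with value `1` at `0`, so for all but countably many
`s` they form a basis of `ℝ[X]`. Then `ℝ[X] ⧸ (g i)` has the odd dimension `D ^ d`, and an
`ℝ`-algebra of odd dimension has a real point, because one of its residue fields has odd degree
over `ℝ`. So the `g i` have a common real zero `x`; after normalising `(1, x)` to a point `y` of
the sphere, `|F i y| = |y (i + 1)| ^ D / s ≤ 1 / s`, and `s` may be taken arbitrarily large.
-/

open MvPolynomial Module

section RealPoints

variable {K A : Type*} [Field K] [CommRing A] [Algebra K A]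

theorem finrank_quotient_sup_add_finrank_quotient_colon [FiniteDimensional K A] (I : Ideal A)
    (x : A) :
    finrank K (A ⧸ I ⊔ Ideal.span {x}) + finrank K (A ⧸ I.colon {x}) = finrank K (A ⧸ I) := by
  let f : A →ₗ[A] A ⧸ I := LinearMap.toSpanSingleton A (A ⧸ I) (Ideal.Quotient.mk I x)
  have hker : LinearMap.ker f = I.colon {x} := by
    ext a
    rw [LinearMap.mem_ker, Submodule.mem_colon_singleton, ← Ideal.Quotient.eq_zero_iff_mem]
    rfl
  have hrange : LinearMap.range f = Submodule.map I.mkQ (Ideal.span {x}) := by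
    rw [LinearMap.range_toSpanSingleton, Ideal.span, Submodule.map_span, Set.image_singleton]
    rfl
  have hcoker : finrank K (A ⧸ I ⊔ Ideal.span {x}) =
      finrank K ((A ⧸ I) ⧸ (LinearMap.range f).restrictScalars K) := by
    rw [hrange]
    exact ((I.quotientQuotientEquivQuotientSup (Ideal.span {x})).restrictScalars K).finrank_eq.symm
  have hcolon : finrank K (A ⧸ I.colon {x}) =
      finrank K ((LinearMap.range f).restrictScalars K) := by
    rw [← hker]
    exact (f.quotKerEquivRange.restrictScalars K).finrank_eq
  rw [hcoker, hcolon, Submodule.finrank_quotient_add_finrank]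

theorem exists_isMaximal_not_dvd_finrank_quotient {n : ℕ} (hn : ¬ n ∣ finrank K A) :
    ∃ I : Ideal A, I.IsMaximal ∧ ¬ n ∣ finrank K (A ⧸ I) := by
  have : FiniteDimensional K A := finite_of_finrank_pos <|
    Nat.pos_of_ne_zero fun h ↦ hn (h ▸ dvd_zero n)
  have : IsNoetherianRing A := isNoetherian_of_tower K inferInstance
  obtain ⟨I, hI, hmax⟩ := (wellFounded_gt (α := Ideal A)).has_min
    {I : Ideal A | ¬ n ∣ finrank K (A ⧸ I)}
    ⟨⊥, by rwa [Set.mem_ofPred_eq, (AlgEquiv.quotientBot K A).toLinearEquiv.finrank_eq]⟩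
  have dvd_of_lt {J : Ideal A} (h : I < J) : n ∣ finrank K (A ⧸ J) :=
    not_not.1 fun hJ ↦ hmax J hJ h
  refine ⟨I, ⟨?_, fun J hIJ ↦ ?_⟩, hI⟩
  · rintro rfl
    simp [finrank_zero_of_subsingleton] at hI
  · obtain ⟨x, hxJ, hxI⟩ := SetLike.exists_of_lt hIJ
    -- The dimensions of `A ⧸ (I + (x))` and `A ⧸ (I : x)` add up to that of `A ⧸ I`, so these
    -- cannot both be proper quotients of `A ⧸ I`.
    have hadd := finrank_quotient_sup_add_finrank_quotient_colon (K := K) I x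
    have hsup : n ∣ finrank K (A ⧸ I ⊔ Ideal.span {x}) :=
      dvd_of_lt (left_lt_sup.2 fun h ↦ hxI (h (Ideal.mem_span_singleton_self x)))
    have hcolon : I.colon {x} = I := by
      refine (Ideal.le_colon.eq_or_lt.resolve_right fun h ↦ hI ?_).symm
      exact hadd ▸ dvd_add hsup (dvd_of_lt h)
    have htop : I ⊔ Ideal.span {x} = ⊤ := by
      rw [hcolon, Nat.add_eq_right, finrank_zero_iff] at hadd
      exact Ideal.Quotient.subsingleton_iff.1 hadd
    rw [eq_top_iff, ← htop]
    exact sup_le hIJ.le ((Ideal.span_singleton_le_iff_mem J).2 hxJ)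

theorem nonempty_algHom_real_of_odd_finrank {A : Type*} [CommRing A] [Algebra ℝ A]
    (hA : Odd (finrank ℝ A)) : Nonempty (A →ₐ[ℝ] ℝ) := by
  obtain ⟨I, hI, hodd⟩ := exists_isMaximal_not_dvd_finrank_quotient hA.not_two_dvd_nat
  let : Field (A ⧸ I) := Ideal.Quotient.field I
  have : FiniteDimensional ℝ (A ⧸ I) := finite_of_finrank_pos <|
    Nat.pos_of_ne_zero fun h ↦ hodd (h ▸ dvd_zero 2)
  obtain ⟨⟨e⟩⟩ | ⟨⟨e⟩⟩ := Real.nonempty_algEquiv_or (A ⧸ I)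
  · exact ⟨e.toAlgHom.comp (Ideal.Quotient.mkₐ ℝ I)⟩
  · rw [e.toLinearEquiv.finrank_eq, Complex.finrank_real_complex] at hodd
    exact absurd dvd_rfl hodd

theorem exists_eval_eq_zero_of_odd_finrank_quotient {σ : Type*} {I : Ideal (MvPolynomial σ ℝ)}
    (hI : Odd (finrank ℝ (MvPolynomial σ ℝ ⧸ I))) :
    ∃ x : σ → ℝ, ∀ p ∈ I, eval x p = 0 := by
  obtain ⟨ψ⟩ := nonempty_algHom_real_of_odd_finrank hI
  let φ := ψ.comp (Ideal.Quotient.mkₐ ℝ I)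
  refine ⟨φ ∘ X, fun p hp ↦ ?_⟩
  calc eval (φ ∘ X) p = φ p := by
        rw [← coe_aeval_eq_eval, RingHom.coe_coe, ← aeval_unique φ]
    _ = 0 := by
        rw [AlgHom.comp_apply, Ideal.Quotient.mkₐ_eq_mk, Ideal.Quotient.eq_zero_iff_mem.2 hp,
          map_zero]

end RealPoints

section CoeffMatrix

variable {σ R S : Type*} [Finite σ]

/-- The exponents of the monomials of total degree at most `n` in the variables `σ`. -/
noncomputable def exponentsOfDegreeLE (σ : Type*) [Finite σ] (n : ℕ) : Finset (σ →₀ ℕ) :=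
  (Finsupp.finite_of_degree_le n).toFinset

@[simp]
theorem mem_exponentsOfDegreeLE {n : ℕ} {m : σ →₀ ℕ} :
    m ∈ exponentsOfDegreeLE σ n ↔ m.degree ≤ n := by
  simp [exponentsOfDegreeLE]

theorem exists_subset_exponentsOfDegreeLE (s : Finset (σ →₀ ℕ)) :
    ∃ n, s ⊆ exponentsOfDegreeLE σ n :=
  ⟨s.sup Finsupp.degree, fun _ hm ↦ mem_exponentsOfDegreeLE.2 (Finset.le_sup hm)⟩

/-- The matrix expressing the polynomials `φ m` with `m` of degree at most `n` in terms of the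
monomials of degree at most `n`. -/
noncomputable def coeffMatrix [CommSemiring R] (n : ℕ) (φ : (σ →₀ ℕ) → MvPolynomial σ R) :
    Matrix (exponentsOfDegreeLE σ n) (exponentsOfDegreeLE σ n) R :=
  Matrix.of fun m m' ↦ coeff (m : σ →₀ ℕ) (φ m')

theorem coeffMatrix_monomial [CommSemiring R] [DecidableEq σ] (n : ℕ) :
    coeffMatrix n (fun m : σ →₀ ℕ ↦ monomial m (1 : R)) = 1 := by
  ext m m'
  simp [coeffMatrix, coeff_monomial, Matrix.one_apply, eq_comm]

theorem coeffMatrix_map [CommSemiring R] [CommSemiring S] (f : R →+* S) (n : ℕ)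
    (φ : (σ →₀ ℕ) → MvPolynomial σ R) :
    coeffMatrix n (fun m ↦ map f (φ m)) = (coeffMatrix n φ).map f := by
  ext m m'
  exact coeff_map f _ _

theorem coeff_sum_smul_eq_coeffMatrix_mulVec [CommSemiring R] {n : ℕ}
    (φ : (σ →₀ ℕ) → MvPolynomial σ R) (v : exponentsOfDegreeLE σ n → R)
    (m : exponentsOfDegreeLE σ n) :
    coeff (m : σ →₀ ℕ) (∑ m', v m' • φ m') = (coeffMatrix n φ).mulVec v m := by
  simp [coeffMatrix, coeff_sum, Matrix.mulVec, dotProduct, mul_comm]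

variable [CommRing R] [DecidableEq σ] {φ : (σ →₀ ℕ) → MvPolynomial σ R}

theorem linearIndependent_of_isUnit_coeffMatrix (hφ : ∀ n, IsUnit (coeffMatrix n φ)) :
    LinearIndependent R φ := by
  refine linearIndependent_iff_finset_linearIndependent.2 fun s ↦ ?_
  obtain ⟨n, hsn⟩ := exists_subset_exponentsOfDegreeLE s
  have hli : LinearIndependent R fun m : exponentsOfDegreeLE σ n ↦ φ m := by
    refine Fintype.linearIndependent_iff.2 fun v hv ↦ congrFun ?_
    refine Matrix.mulVec_injective_of_isUnit (hφ n) ?_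
    ext m
    rw [← coeff_sum_smul_eq_coeffMatrix_mulVec, hv, coeff_zero]
    exact congrFun (Matrix.mulVec_zero _).symm m
  exact hli.comp (Set.inclusion hsn) (Set.inclusion_injective hsn)

theorem span_range_eq_top_of_isUnit_coeffMatrix (hdeg : ∀ m, (φ m).totalDegree ≤ m.degree)
    (hφ : ∀ n, IsUnit (coeffMatrix n φ)) : Submodule.span R (Set.range φ) = ⊤ := by
  refine eq_top_iff.2 fun p _ ↦ ?_
  obtain ⟨v, hv⟩ := Matrix.mulVec_surjective_iff_isUnit.2 (hφ p.totalDegree) fun m ↦ coeff m p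
  suffices p = ∑ m', v m' • φ m' from
    this ▸ Submodule.sum_smul_mem _ v fun m' _ ↦ Submodule.subset_span ⟨m', rfl⟩
  ext m
  by_cases hm : m ∈ exponentsOfDegreeLE σ p.totalDegree
  · rw [coeff_sum_smul_eq_coeffMatrix_mulVec φ v ⟨m, hm⟩, hv]
  · rw [mem_exponentsOfDegreeLE, not_le] at hm
    have hsum : (∑ m', v m' • φ m').totalDegree ≤ p.totalDegree :=
      totalDegree_finsetSum_le fun m' _ ↦ (totalDegree_smul_le _ _).trans <|
        (hdeg m').trans (mem_exponentsOfDegreeLE.1 m'.2)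
    rw [coeff_eq_zero_of_totalDegree_lt hm, coeff_eq_zero_of_totalDegree_lt (hsum.trans_lt hm)]

end CoeffMatrix

section MixedMonomial

variable {σ R S : Type*} [Fintype σ] [CommSemiring R] [CommSemiring S]

/-- The product of the powers `X i ^ (m i % D)` and `g i ^ (m i / D)`. If each `g i` behaves like
`X i ^ D`, this is a deformation of the monomial with exponent `m`. -/
noncomputable def mixedMonomial (D : ℕ) (g : σ → MvPolynomial σ R) (m : σ →₀ ℕ) :
    MvPolynomial σ R :=
  ∏ i, X i ^ (m i % D) * g i ^ (m i / D)

theorem mixedMonomial_X_pow (D : ℕ) (m : σ →₀ ℕ) :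
    mixedMonomial D (fun i ↦ (X i ^ D : MvPolynomial σ R)) m = monomial m 1 := by
  rw [monomial_eq, C_1, one_mul, Finsupp.prod_fintype _ _ fun i ↦ pow_zero _]
  refine Finset.prod_congr rfl fun i _ ↦ ?_
  rw [← pow_mul, ← pow_add, Nat.mod_add_div]

theorem map_mixedMonomial (f : R →+* S) (D : ℕ) (g : σ → MvPolynomial σ R) (m : σ →₀ ℕ) :
    map f (mixedMonomial D g m) = mixedMonomial D (fun i ↦ map f (g i)) m := by
  simp [mixedMonomial]

theorem totalDegree_mixedMonomial_le [Nontrivial R] {D : ℕ} {g : σ → MvPolynomial σ R}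
    (hg : ∀ i, (g i).totalDegree ≤ D) (m : σ →₀ ℕ) :
    (mixedMonomial D g m).totalDegree ≤ m.degree := by
  rw [Finsupp.degree_eq_sum]
  refine (totalDegree_finsetProd _ _).trans (Finset.sum_le_sum fun i _ ↦ ?_)
  calc (X i ^ (m i % D) * g i ^ (m i / D)).totalDegree
      ≤ (X i ^ (m i % D) : MvPolynomial σ R).totalDegree + (g i ^ (m i / D)).totalDegree :=
        totalDegree_mul _ _
    _ ≤ m i % D + m i / D * D := by
        rw [totalDegree_X_pow]
        gcongr
        exact (totalDegree_pow _ _).trans (Nat.mul_le_mul_left _ (hg i))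
    _ = m i := Nat.mod_add_div' _ _

theorem mixedMonomial_mul {D : ℕ} (hD : 0 < D) (g : σ → MvPolynomial σ R) (m : σ →₀ ℕ) (i : σ) :
    mixedMonomial D g m * g i = mixedMonomial D g (m + Finsupp.single i D) := by
  classical
  have hfactor (j : σ) :
      X j ^ ((m + Finsupp.single i D) j % D) * g j ^ ((m + Finsupp.single i D) j / D) =
        X j ^ (m j % D) * g j ^ (m j / D) * if i = j then g j else 1 := by
    by_cases h : i = j
    · subst h
      simp [Nat.add_div_right _ hD, pow_succ, mul_assoc]
    · simp [h]
  simp only [mixedMonomial, hfactor, Finset.prod_mul_distrib, Finset.prod_ite_eq, Finset.mem_univ,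
    if_true]

theorem dvd_mixedMonomial {D : ℕ} (hD : 0 < D) (g : σ → MvPolynomial σ R) {m : σ →₀ ℕ} {i : σ}
    (hi : D ≤ m i) : g i ∣ mixedMonomial D g m := by
  have hsub : m - Finsupp.single i D + Finsupp.single i D = m :=
    tsub_add_cancel_of_le (Finsupp.single_le_iff.2 hi)
  rw [← hsub, ← mixedMonomial_mul hD]
  exact dvd_mul_left _ _

end MixedMonomial

section QuotientDimension

variable {σ R : Type*} [Fintype σ] [CommRing R] {D : ℕ} {g : σ → MvPolynomial σ R}

theorem restrictScalars_span_range_eq_span_mixedMonomial_image (hD : 0 < D)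
    (hspan : Submodule.span R (Set.range (mixedMonomial D g)) = ⊤) :
    (Ideal.span (Set.range g)).restrictScalars R =
      Submodule.span R (mixedMonomial D g '' {m | ∃ i, D ≤ m i}) := by
  apply le_antisymm
  · intro q hq
    obtain ⟨h, rfl⟩ := Ideal.mem_span_range_iff_exists_fun.1 hq
    refine Submodule.sum_mem _ fun i _ ↦ ?_
    have hmul : (Submodule.span R (Set.range (mixedMonomial D g))).map
        (LinearMap.mulRight R (g i)) ≤
          Submodule.span R (mixedMonomial D g '' {m | ∃ i, D ≤ m i}) := by
      refine (Submodule.map_span_le _ _ _).2 ?_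
      rintro _ ⟨m, rfl⟩
      rw [LinearMap.mulRight_apply, mixedMonomial_mul hD]
      exact Submodule.subset_span ⟨_, ⟨i, by simp⟩, rfl⟩
    exact hmul ⟨h i, hspan ▸ Submodule.mem_top, rfl⟩
  · rw [Submodule.span_le]
    rintro _ ⟨m, ⟨i, hi⟩, rfl⟩
    exact Ideal.mem_of_dvd _ (dvd_mixedMonomial hD g hi) (Ideal.subset_span ⟨i, rfl⟩)

theorem natCard_finsupp_forall_lt (σ : Type*) [Fintype σ] (D : ℕ) :
    Nat.card {m : σ →₀ ℕ | ∀ i, m i < D} = D ^ Fintype.card σ := by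
  calc Nat.card {m : σ →₀ ℕ | ∀ i, m i < D}
      = Nat.card {m : σ → ℕ // ∀ i, m i < D} :=
        Nat.card_congr (Finsupp.equivFunOnFinite.subtypeEquiv fun _ ↦ Iff.rfl)
    _ = Nat.card (σ → {k : ℕ // k < D}) := Nat.card_congr <|
        Equiv.subtypePiEquivPi (p := fun _ (k : ℕ) ↦ k < D)
    _ = Nat.card (σ → Fin D) := Nat.card_congr (Equiv.piCongrRight fun _ ↦ Fin.equivSubtype.symm)
    _ = D ^ Fintype.card σ := by rw [Nat.card_fun, Nat.card_fin, Nat.card_eq_fintype_card]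

theorem finrank_quotient_span_range_of_mixedMonomial [Nontrivial R] (hD : 0 < D)
    (hli : LinearIndependent R (mixedMonomial D g))
    (hspan : Submodule.span R (Set.range (mixedMonomial D g)) = ⊤) :
    finrank R (MvPolynomial σ R ⧸ Ideal.span (Set.range g)) = D ^ Fintype.card σ := by
  let t : Set (σ →₀ ℕ) := {m | ∀ i, m i < D}
  have htc : tᶜ = {m | ∃ i, D ≤ m i} := by
    ext m
    simp [t]
  have hcompl : IsCompl ((Ideal.span (Set.range g)).restrictScalars R)
      (Submodule.span R (mixedMonomial D g '' t)) := by
    rw [restrictScalars_span_range_eq_span_mixedMonomial_image hD hspan, ← htc]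
    exact hli.isCompl_span_image hspan isCompl_compl.symm
  calc finrank R (MvPolynomial σ R ⧸ Ideal.span (Set.range g))
      = finrank R (Submodule.span R (mixedMonomial D g '' t)) :=
        (Submodule.quotientEquivOfIsCompl _ _ hcompl).finrank_eq
    _ = Nat.card t := by
        rw [Set.image_eq_range]
        exact finrank_eq_nat_card_basis (Basis.span (hli.comp _ Subtype.val_injective))
    _ = D ^ Fintype.card σ := natCard_finsupp_forall_lt σ D

end QuotientDimension

section PowDeformation

variable {σ R S : Type*} [CommSemiring R] [CommSemiring S]

/-- The system of polynomials `X i ^ D + s * p i`, regarded as a deformation with parameter `s` of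
the system of powers `X i ^ D`. -/
noncomputable def powDeformation (D : ℕ) (p : σ → MvPolynomial σ R) (s : R) :
    σ → MvPolynomial σ R :=
  fun i ↦ X i ^ D + C s * p i

theorem map_powDeformation (f : R →+* S) (D : ℕ) (p : σ → MvPolynomial σ R) (s : R) (i : σ) :
    map f (powDeformation D p s i) = powDeformation D (fun j ↦ map f (p j)) (f s) i := by
  simp [powDeformation]

theorem totalDegree_powDeformation_le [Nontrivial R] {D : ℕ} {p : σ → MvPolynomial σ R}
    (hp : ∀ i, (p i).totalDegree ≤ D) (s : R) (i : σ) :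
    (powDeformation D p s i).totalDegree ≤ D := by
  refine (totalDegree_add _ _).trans (max_le (totalDegree_X_pow _ _).le ?_)
  refine (totalDegree_mul _ _).trans ?_
  rw [totalDegree_C, zero_add]
  exact hp i

theorem coeffMatrix_mixedMonomial_powDeformation_zero [Fintype σ] [DecidableEq σ] (n D : ℕ)
    (p : σ → MvPolynomial σ R) :
    coeffMatrix n (mixedMonomial D (powDeformation D p 0)) = 1 := by
  have hpow : powDeformation D p 0 = fun i ↦ X i ^ D := by
    funext i
    simp [powDeformation]
  rw [hpow, ← coeffMatrix_monomial]
  exact congrArg (coeffMatrix n) (funext (mixedMonomial_X_pow D))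

theorem det_coeffMatrix_mixedMonomial_powDeformation {R : Type*} [CommRing R] [Fintype σ]
    [DecidableEq σ] (n D : ℕ) (p : σ → MvPolynomial σ R) (s : R) :
    (coeffMatrix n (mixedMonomial D (powDeformation D p s))).det =
      (coeffMatrix n (mixedMonomial D
        (powDeformation D (fun i ↦ map Polynomial.C (p i)) Polynomial.X))).det.eval s := by
  have heval : (Polynomial.evalRingHom s).comp Polynomial.C = RingHom.id R := by
    ext a
    simp
  have hmap (m : σ →₀ ℕ) : mixedMonomial D (powDeformation D p s) m =
      map (Polynomial.evalRingHom s) (mixedMonomial D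
        (powDeformation D (fun i ↦ map Polynomial.C (p i)) Polynomial.X) m) := by
    simp [map_mixedMonomial, map_powDeformation, map_map, heval, MvPolynomial.map_id]
  rw [funext hmap, coeffMatrix_map, ← Polynomial.coe_evalRingHom, RingHom.map_det]
  rfl

theorem countable_not_isUnit_coeffMatrix_mixedMonomial {K : Type*} [Field K] [Fintype σ]
    [DecidableEq σ] (D : ℕ) (p : σ → MvPolynomial σ K) :
    {s : K | ∃ n, ¬ IsUnit (coeffMatrix n (mixedMonomial D (powDeformation D p s)))}.Countable := by
  let Δ (n : ℕ) : Polynomial K := (coeffMatrix n (mixedMonomial D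
    (powDeformation D (fun i ↦ map Polynomial.C (p i)) Polynomial.X))).det
  have hset : {s : K | ∃ n, ¬ IsUnit (coeffMatrix n (mixedMonomial D (powDeformation D p s)))} =
      ⋃ n, {s | (Δ n).IsRoot s} := by
    ext s
    simp [Δ, Matrix.isUnit_iff_isUnit_det, ← det_coeffMatrix_mixedMonomial_powDeformation]
  rw [hset]
  refine Set.countable_iUnion fun n ↦ (Polynomial.finite_setOfPred_isRoot fun h ↦ ?_).countable
  have hone : 1 = (Δ n).eval 0 := by
    rw [← det_coeffMatrix_mixedMonomial_powDeformation,
      coeffMatrix_mixedMonomial_powDeformation_zero, Matrix.det_one]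
  rw [h, Polynomial.eval_zero] at hone
  exact one_ne_zero hone

theorem exists_gt_exists_eval_powDeformation_eq_zero [Finite σ] {D : ℕ} (hD : Odd D)
    {p : σ → MvPolynomial σ ℝ} (hp : ∀ i, (p i).totalDegree ≤ D) (r : ℝ) :
    ∃ s > r, ∃ x : σ → ℝ, ∀ i, eval x (powDeformation D p s i) = 0 := by
  classical
  have : Fintype σ := Fintype.ofFinite σ
  obtain ⟨s, hs, hrs⟩ :=
    ((countable_not_isUnit_coeffMatrix_mixedMonomial D p).dense_compl ℝ).exists_gt r
  have hunit (n : ℕ) : IsUnit (coeffMatrix n (mixedMonomial D (powDeformation D p s))) := by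
    by_contra h
    exact hs ⟨n, h⟩
  have hdim := finrank_quotient_span_range_of_mixedMonomial hD.pos
    (linearIndependent_of_isUnit_coeffMatrix hunit)
    (span_range_eq_top_of_isUnit_coeffMatrix
      (totalDegree_mixedMonomial_le (totalDegree_powDeformation_le hp s)) hunit)
  obtain ⟨x, hx⟩ := exists_eval_eq_zero_of_odd_finrank_quotient (hdim ▸ hD.pow)
  exact ⟨s, hrs, x, fun i ↦ hx _ (Ideal.subset_span ⟨i, rfl⟩)⟩

end PowDeformation

theorem exists_abs_eval_sub_lt_of_injOn {α σ : Type*} [TopologicalSpace α] {K : Set α}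
    (hK : IsCompact K) {c : α → σ → ℝ} (hc : ContinuousOn c K) (hinj : Set.InjOn c K) {h : α → ℝ}
    (hh : ContinuousOn h K) {ε : ℝ} (hε : 0 < ε) :
    ∃ q : MvPolynomial σ ℝ, ∀ y ∈ K, |eval (c y) q - h y| < ε := by
  have : CompactSpace K := isCompact_iff_compactSpace.1 hK
  let coord (i : σ) : C(K, ℝ) := ⟨fun y ↦ c y i, (continuous_pi_iff.1 hc.domRestrict) i⟩
  have hsep : (aeval (R := ℝ) coord).range.SeparatesPoints := by
    intro x y hxy
    obtain ⟨i, hi⟩ := Function.ne_iff.1 (hinj.ne x.2 y.2 (Subtype.coe_injective.ne hxy))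
    exact ⟨coord i, ⟨coord i, ⟨X i, aeval_X _ _⟩, rfl⟩, hi⟩
  obtain ⟨⟨_, q, rfl⟩, hq⟩ :=
    ContinuousMap.exists_mem_subalgebra_near_continuousMap_of_separatesPoints _ hsep
      ⟨K.domRestrict h, hh.domRestrict⟩ ε hε
  refine ⟨q, fun y hy ↦ ?_⟩
  have heval : aeval coord q ⟨y, hy⟩ = eval (c y) q := by
    have hcomp : (ContinuousMap.evalAlgHom ℝ ℝ (⟨y, hy⟩ : K)).comp (aeval coord) =
        aeval (c y) := by
      ext i
      rw [AlgHom.comp_apply, aeval_X, aeval_X]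
      rfl
    exact DFunLike.congr_fun hcomp q
  rw [← heval]
  exact (ContinuousMap.norm_coe_le_norm _ (⟨y, hy⟩ : K)).trans_lt hq

section Homogeneous

variable {σ R : Type*}

theorem eval_smul_of_isHomogeneous [CommSemiring R] {F : MvPolynomial σ R} {n : ℕ}
    (hF : F.IsHomogeneous n) (t : R) (y : σ → R) : eval (t • y) F = t ^ n * eval y F := by
  rw [eval_eq, eval_eq, Finset.mul_sum]
  refine Finset.sum_congr rfl fun m hm ↦ ?_
  simp only [Pi.smul_apply, smul_eq_mul, mul_pow, Finset.prod_mul_distrib,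
    Finset.prod_pow_eq_pow_sum]
  rw [← hF.degree_eq_sum_deg_support hm, mul_left_comm]

theorem sum_homogeneousComponent_of_totalDegree_le [CommSemiring R] {q : MvPolynomial σ R} {n : ℕ}
    (hq : q.totalDegree ≤ n) : ∑ k ∈ Finset.range (n + 1), homogeneousComponent k q = q := by
  nth_rewrite 2 [← sum_homogeneousComponent q]
  refine (Finset.sum_subset (Finset.range_mono (Nat.succ_le_succ hq)) fun k _ hk ↦ ?_).symm
  rw [Finset.mem_range, not_lt] at hk
  exact homogeneousComponent_eq_zero k q hk

/-- The form of odd degree `D` which agrees on the unit sphere with the odd part of `q`, for `q` of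
degree at most `D`: the components of odd degree of `q`, each raised to degree `D` by a power of
`∑ j, X j ^ 2`. -/
noncomputable def oddHomogenization [Fintype σ] [CommSemiring R] (D : ℕ) (q : MvPolynomial σ R) :
    MvPolynomial σ R :=
  ∑ k ∈ Finset.range (D + 1) with Odd k,
    homogeneousComponent k q * (∑ j, X j ^ 2) ^ ((D - k) / 2)

theorem isHomogeneous_oddHomogenization [Fintype σ] [CommSemiring R] {D : ℕ} (hD : Odd D)
    (q : MvPolynomial σ R) : (oddHomogenization D q).IsHomogeneous D := by
  refine IsHomogeneous.sum _ _ _ fun k hk ↦ ?_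
  obtain ⟨hkD, hk⟩ := Finset.mem_filter.1 hk
  have hsq : (∑ j : σ, (X j ^ 2 : MvPolynomial σ R)).IsHomogeneous 2 :=
    IsHomogeneous.sum _ _ _ fun j _ ↦ isHomogeneous_X_pow _ _
  have hdeg : k + 2 * ((D - k) / 2) = D := by
    rw [Nat.two_mul_div_two_of_even (Nat.Odd.sub_odd hD hk)]
    exact Nat.add_sub_of_le (Finset.mem_range_succ_iff.1 hkD)
  have hmul := (homogeneousComponent_isHomogeneous k q).mul (hsq.pow ((D - k) / 2))
  rwa [hdeg] at hmul

theorem eval_sub_eval_neg_eq_two_mul_eval_oddHomogenization [Fintype σ] [CommRing R]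
    {q : MvPolynomial σ R} {D : ℕ} (hq : q.totalDegree ≤ D) {y : σ → R} (hy : ∑ j, y j ^ 2 = 1) :
    eval y q - eval (-y) q = 2 * eval y (oddHomogenization D q) := by
  have hneg (k : ℕ) : eval (-y) (homogeneousComponent k q) =
      (-1) ^ k * eval y (homogeneousComponent k q) := by
    rw [← eval_smul_of_isHomogeneous (homogeneousComponent_isHomogeneous k q), neg_one_smul]
  calc eval y q - eval (-y) q
      = ∑ k ∈ Finset.range (D + 1), (eval y (homogeneousComponent k q) -
          (-1) ^ k * eval y (homogeneousComponent k q)) := by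
        simp only [← hneg, Finset.sum_sub_distrib, ← map_sum,
          sum_homogeneousComponent_of_totalDegree_le hq]
    _ = ∑ k ∈ Finset.range (D + 1), if Odd k then 2 * eval y (homogeneousComponent k q) else 0 := by
        refine Finset.sum_congr rfl fun k _ ↦ ?_
        split_ifs with hk
        · rw [hk.neg_one_pow]
          ring
        · rw [(Nat.not_odd_iff_even.1 hk).neg_one_pow, one_mul, sub_self]
    _ = 2 * eval y (oddHomogenization D q) := by
        simp [oddHomogenization, Finset.sum_filter, Finset.mul_sum, hy, apply_ite]

theorem exists_isHomogeneous_near_of_odd_on_sphere [Fintype σ] {h : EuclideanSpace ℝ σ → ℝ}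
    (hh : ContinuousOn h (Metric.sphere 0 1))
    (hodd : ∀ y ∈ Metric.sphere (0 : EuclideanSpace ℝ σ) 1, h (-y) = -h y) {ε : ℝ} (hε : 0 < ε) :
    ∃ N : ℕ, ∀ D ≥ N, Odd D → ∃ F : MvPolynomial σ ℝ, F.IsHomogeneous D ∧
      ∀ y ∈ Metric.sphere (0 : EuclideanSpace ℝ σ) 1, |eval y.ofLp F - h y| < ε := by
  obtain ⟨q, hq⟩ := exists_abs_eval_sub_lt_of_injOn (isCompact_sphere _ _)
    (PiLp.continuous_ofLp 2 _).continuousOn (WithLp.ofLp_injective 2).injOn hh hε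
  refine ⟨q.totalDegree, fun D hqD hD ↦
    ⟨oddHomogenization D q, isHomogeneous_oddHomogenization hD q, fun y hy ↦ ?_⟩⟩
  have hsq : ∑ j, y.ofLp j ^ 2 = 1 := by
    rw [← EuclideanSpace.real_norm_sq_eq, mem_sphere_zero_iff_norm.1 hy, one_pow]
  have heval := eval_sub_eval_neg_eq_two_mul_eval_oddHomogenization hqD hsq
  have hpos := abs_lt.1 (hq y hy)
  have hneg := abs_lt.1 (hq (-y) (by simpa using hy))
  rw [hodd y hy, WithLp.ofLp_neg] at hneg
  exact abs_lt.2 ⟨by linarith, by linarith⟩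

theorem totalDegree_aeval_le_of_totalDegree_le_one {τ : Type*} [CommSemiring R]
    {g : σ → MvPolynomial τ R} (hg : ∀ i, (g i).totalDegree ≤ 1) (F : MvPolynomial σ R) :
    (aeval g F).totalDegree ≤ F.totalDegree := by
  rw [aeval_def, eval₂_eq]
  refine totalDegree_finsetSum_le fun m hm ↦ (totalDegree_mul _ _).trans ?_
  rw [algebraMap_eq, totalDegree_C, zero_add]
  refine (totalDegree_finsetProd _ _).trans (le_trans ?_ (le_totalDegree hm))
  refine Finset.sum_le_sum fun i _ ↦ (totalDegree_pow _ _).trans ?_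
  exact (Nat.mul_le_mul_left (m i) (hg i)).trans_eq (mul_one _)

end Homogeneous

section Dehomogenize

variable {R : Type*} [CommSemiring R] {d : ℕ}

/-- The affine polynomial obtained from a polynomial in homogeneous coordinates by setting the
`0`-th coordinate to `1`. -/
noncomputable def dehomogenize : MvPolynomial (Fin (d + 1)) R →ₐ[R] MvPolynomial (Fin d) R :=
  aeval (Fin.cons 1 X)

theorem eval_dehomogenize (x : Fin d → R) (F : MvPolynomial (Fin (d + 1)) R) :
    eval x (dehomogenize F) = eval (Fin.cons 1 x : Fin (d + 1) → R) F := by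
  suffices (aeval x).comp dehomogenize = aeval (R := R) (Fin.cons 1 x : Fin (d + 1) → R) from
    DFunLike.congr_fun this F
  ext j
  refine Fin.cases ?_ (fun i ↦ ?_) j <;> simp [dehomogenize]

theorem totalDegree_dehomogenize_le [Nontrivial R] (F : MvPolynomial (Fin (d + 1)) R) :
    (dehomogenize F).totalDegree ≤ F.totalDegree := by
  refine totalDegree_aeval_le_of_totalDegree_le_one (fun j ↦ ?_) F
  refine Fin.cases ?_ (fun i ↦ ?_) j <;> simp

end Dehomogenize

section ApproximateZeros

variable {d D : ℕ} {F : Fin d → MvPolynomial (Fin (d + 1)) ℝ}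

theorem exists_gt_exists_sphere_pow_add_mul_eval_eq_zero (hD : Odd D)
    (hF : ∀ i, (F i).IsHomogeneous D) (r : ℝ) :
    ∃ s > r, ∃ y ∈ Metric.sphere (0 : EuclideanSpace ℝ (Fin (d + 1))) 1,
      ∀ i, y i.succ ^ D + s * eval y.ofLp (F i) = 0 := by
  obtain ⟨s, hs, x, hx⟩ := exists_gt_exists_eval_powDeformation_eq_zero hD
    (fun i ↦ (totalDegree_dehomogenize_le (F i)).trans (hF i).totalDegree_le) r
  let z : EuclideanSpace ℝ (Fin (d + 1)) := WithLp.toLp 2 (Fin.cons 1 x)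
  have hz : z ≠ 0 := fun h ↦ one_ne_zero (congrArg (fun w ↦ w.ofLp 0) h)
  have hzF (i : Fin d) : z i.succ ^ D + s * eval z.ofLp (F i) = 0 := by
    simpa [powDeformation, eval_dehomogenize, z] using hx i
  refine ⟨s, hs, ‖z‖⁻¹ • z, mem_sphere_zero_iff_norm.2 (norm_smul_inv_norm hz), fun i ↦ ?_⟩
  rw [WithLp.ofLp_smul, eval_smul_of_isHomogeneous (hF i), Pi.smul_apply, smul_eq_mul, mul_pow,
    mul_left_comm, ← mul_add, hzF, mul_zero]

theorem exists_sphere_abs_eval_lt_of_isHomogeneous (hD : Odd D)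
    (hF : ∀ i, (F i).IsHomogeneous D) {ε : ℝ} (hε : 0 < ε) :
    ∃ y ∈ Metric.sphere (0 : EuclideanSpace ℝ (Fin (d + 1))) 1, ∀ i, |eval y.ofLp (F i)| < ε := by
  obtain ⟨s, hs, y, hy, hyF⟩ := exists_gt_exists_sphere_pow_add_mul_eval_eq_zero hD hF ε⁻¹
  have hs0 : 0 < s := (inv_pos.2 hε).trans hs
  refine ⟨y, hy, fun i ↦ lt_of_mul_lt_mul_left ?_ hs0.le⟩
  have hcoord : |y i.succ| ≤ 1 := mem_sphere_zero_iff_norm.1 hy ▸ PiLp.norm_apply_le y i.succ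
  calc s * |eval y.ofLp (F i)| = |y i.succ| ^ D := by
        rw [← abs_pow, eq_neg_of_add_eq_zero_left (hyF i), abs_neg, abs_mul, abs_of_pos hs0]
    _ ≤ 1 := pow_le_one₀ (abs_nonneg _) hcoord
    _ < s * ε := (inv_lt_iff_one_lt_mul₀ hε).1 hs

end ApproximateZeros

theorem exists_eq_zero_of_forall_exists_norm_lt {α E : Type*} [TopologicalSpace α]
    [NormedAddCommGroup E] {K : Set α} (hK : IsCompact K) {f : α → E} (hf : ContinuousOn f K)
    (happrox : ∀ ε > 0, ∃ x ∈ K, ‖f x‖ < ε) : ∃ x ∈ K, f x = 0 := by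
  obtain ⟨x₀, hx₀, -⟩ := happrox 1 one_pos
  obtain ⟨x, hx, hmin⟩ := hK.exists_isMinOn ⟨x₀, hx₀⟩ hf.norm
  refine ⟨x, hx, by_contra fun hne ↦ ?_⟩
  obtain ⟨y, hy, hlt⟩ := happrox ‖f x‖ (norm_pos_iff.2 hne)
  exact (hmin hy).not_gt hlt

theorem exists_sphere_abs_lt_of_odd {d : ℕ} {h : Fin d → EuclideanSpace ℝ (Fin (d + 1)) → ℝ}
    (hh : ∀ i, ContinuousOn (h i) (Metric.sphere 0 1))
    (hodd : ∀ i, ∀ y ∈ Metric.sphere (0 : EuclideanSpace ℝ (Fin (d + 1))) 1, h i (-y) = -h i y)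
    {ε : ℝ} (hε : 0 < ε) :
    ∃ y ∈ Metric.sphere (0 : EuclideanSpace ℝ (Fin (d + 1))) 1, ∀ i, |h i y| < ε := by
  choose N hN using fun i ↦
    exists_isHomogeneous_near_of_odd_on_sphere (hh i) (hodd i) (half_pos hε)
  let D := 2 * Finset.univ.sup N + 1
  have hND (i : Fin d) : N i ≤ D := by
    have := Finset.le_sup (f := N) (Finset.mem_univ i)
    omega
  choose F hF hFh using fun i ↦ hN i D (hND i) (odd_two_mul_add_one _)
  obtain ⟨y, hy, hyF⟩ :=
    exists_sphere_abs_eval_lt_of_isHomogeneous (odd_two_mul_add_one _) hF (half_pos hε)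
  refine ⟨y, hy, fun i ↦ ?_⟩
  have hnear := abs_lt.1 (hFh i y hy)
  have hsmall := abs_lt.1 (hyF i)
  exact abs_lt.2 ⟨by linarith, by linarith⟩

theorem borsuk_ulam_sphere (d : ℕ) (hd : 1 ≤ d)
    (f : EuclideanSpace ℝ (Fin (d + 1)) → EuclideanSpace ℝ (Fin d))
    (hf : ContinuousOn f (Metric.sphere (0 : EuclideanSpace ℝ (Fin (d + 1))) 1))
    (hodd : ∀ x ∈ Metric.sphere (0 : EuclideanSpace ℝ (Fin (d + 1))) 1,
      f (-x) = -f x) :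
    ∃ x ∈ Metric.sphere (0 : EuclideanSpace ℝ (Fin (d + 1))) 1, f x = 0 := by
  have hcont : ContinuousOn (fun x ↦ (f x).ofLp) (Metric.sphere 0 1) :=
    (PiLp.continuous_ofLp 2 _).comp_continuousOn hf
  have happrox (ε : ℝ) (hε : 0 < ε) :
      ∃ x ∈ Metric.sphere (0 : EuclideanSpace ℝ (Fin (d + 1))) 1, ‖(f x).ofLp‖ < ε := by
    obtain ⟨x, hx, hlt⟩ := exists_sphere_abs_lt_of_odd (continuousOn_pi.1 hcont)
      (fun i y hy ↦ by rw [hodd y hy, PiLp.neg_apply]) hε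
    exact ⟨x, hx, (pi_norm_lt_iff hε).2 hlt⟩
  obtain ⟨x, hx, hfx⟩ :=
    exists_eq_zero_of_forall_exists_norm_lt (isCompact_sphere _ _) hcont happrox
  exact ⟨x, hx, (WithLp.ofLp_eq_zero 2).1 hfx⟩
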